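/- Let c > 0, let U and U^L be reals with 0 ≤ U ≤ c and U^L ≥ U/2. Then for every μ ≥ 0, U^L·e^{−μ} + (c/2)·(1 − e^{−μ} − μ·e^{−μ}) ≥ (1/2)·(1 − 1/e)·U. -/

import Mathlib

/-!
For `N` Poisson of mean `μ`, the left-hand side is `U^L · P(N = 0) + (c/2) · P(N ≥ 2)`. Both `U^L`
and `c/2` are at least `U/2`, so it is at least `(U/2) · P(N ≠ 1)`, and `P(N = 1) = μ·e^{−μ}` is
largest at `μ = 1`, where it equals `1/e`.
-/

open Real

theorem add_one_mul_exp_neg_le_one (μ : ℝ) : (μ + 1) * exp (-μ) ≤ 1 :=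
  calc (μ + 1) * exp (-μ) ≤ exp μ * exp (-μ) := by grw [add_one_le_exp μ]
    _ = 1 := by rw [← exp_add, add_neg_cancel, exp_zero]

theorem mul_one_sub_mul_exp_neg_le {a x y : ℝ} (hx : a ≤ x) (hy : a ≤ y) (μ : ℝ) :
    a * (1 - μ * exp (-μ)) ≤ x * exp (-μ) + y * (1 - exp (-μ) - μ * exp (-μ)) := by
  have tail_nonneg : 0 ≤ 1 - exp (-μ) - μ * exp (-μ) := by
    linarith [add_one_mul_exp_neg_le_one μ]
  calc a * (1 - μ * exp (-μ))
      = a * exp (-μ) + a * (1 - exp (-μ) - μ * exp (-μ)) := by ring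
    _ ≤ x * exp (-μ) + y * (1 - exp (-μ) - μ * exp (-μ)) := by gcongr

theorem stmt8_general {a x y : ℝ} (ha : 0 ≤ a) (hx : a ≤ x) (hy : a ≤ y) (μ : ℝ) :
    (1 - 1 / exp 1) * a ≤ x * exp (-μ) + y * (1 - exp (-μ) - μ * exp (-μ)) := by
  have mul_exp_neg_le : μ * exp (-μ) ≤ 1 / exp 1 := by
    simpa only [exp_neg, one_div] using mul_exp_neg_le_exp_neg_one μ
  calc (1 - 1 / exp 1) * a ≤ (1 - μ * exp (-μ)) * a := by gcongr
    _ = a * (1 - μ * exp (-μ)) := mul_comm _ _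
    _ ≤ x * exp (-μ) + y * (1 - exp (-μ) - μ * exp (-μ)) := mul_one_sub_mul_exp_neg_le hx hy μ

/-- Let `c > 0`, `0 ≤ U ≤ c` and `U^L ≥ U/2`. Then for every `μ ≥ 0`,
`U^L·e^{−μ} + (c/2)·(1 − e^{−μ} − μ·e^{−μ}) ≥ (1/2)·(1 − 1/e)·U`. -/
theorem stmt8 (c U UL μ : ℝ) (hc : 0 < c) (hU0 : 0 ≤ U) (hUc : U ≤ c)
    (hUL : UL ≥ U / 2) (hμ : 0 ≤ μ) :
    UL * Real.exp (-μ) + (c / 2) * (1 - Real.exp (-μ) - μ * Real.exp (-μ))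
      ≥ (1 / 2) * (1 - 1 / Real.exp 1) * U := by
  linarith [stmt8_general (a := U / 2) (y := c / 2) (by linarith) hUL (by linarith) μ]
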